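/- If φ ∈ BUC(ℝ^n), then R_j(φ) ∈ VMO(ℝ^n) for each j = 1, …, n. -/

import Mathlib

open MeasureTheory Real Set Filter

/-- Open axis-parallel cube with corner `c` and side length `l`. -/
def cube {n : ℕ} (c : EuclideanSpace ℝ (Fin n)) (l : ℝ) : Set (EuclideanSpace ℝ (Fin n)) :=
  {x | ∀ i, x i ∈ Set.Ioo (c i) (c i + l)}

/-- Mean of `f` over the cube with corner `c` and side length `l`. -/
noncomputable def cubeAvg {n : ℕ} (f : EuclideanSpace ℝ (Fin n) → ℝ)
    (c : EuclideanSpace ℝ (Fin n)) (l : ℝ) : ℝ :=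
  (∫ x in cube c l, f x) / l ^ n

/-- Mean oscillation of `f` over the cube with corner `c` and side length `l`. -/
noncomputable def cubeOsc {n : ℕ} (f : EuclideanSpace ℝ (Fin n) → ℝ)
    (c : EuclideanSpace ℝ (Fin n)) (l : ℝ) : ℝ :=
  (∫ x in cube c l, |f x - cubeAvg f c l|) / l ^ n

/-- `f ∈ BMO(ℝⁿ)`. -/
def IsBMO {n : ℕ} (f : EuclideanSpace ℝ (Fin n) → ℝ) : Prop :=
  LocallyIntegrable f ∧ ∃ C, ∀ c l, 0 < l → cubeOsc f c l ≤ C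

/-- `f ∈ VMO(ℝⁿ)`. -/
def IsVMO {n : ℕ} (f : EuclideanSpace ℝ (Fin n) → ℝ) : Prop :=
  IsBMO f ∧ ∀ ε > (0 : ℝ), ∃ δ > (0 : ℝ), ∀ c l, 0 < l → l ≤ δ → cubeOsc f c l ≤ ε

/-- The `BMO` seminorm `‖f‖_*`. -/
noncomputable def bmoNorm {n : ℕ} (f : EuclideanSpace ℝ (Fin n) → ℝ) : ℝ :=
  sInf {C : ℝ | 0 ≤ C ∧ ∀ c l, 0 < l → cubeOsc f c l ≤ C}

/-- Riesz kernel `K_j(x) = c_n x_j / |x|^{n+1}` with `c_n = Γ((n+1)/2)/π^((n+1)/2)`. -/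
noncomputable def rieszK (n : ℕ) (j : Fin n) (x : EuclideanSpace ℝ (Fin n)) : ℝ :=
  (Real.Gamma (((n : ℝ) + 1) / 2) / Real.pi ^ (((n : ℝ) + 1) / 2)) * x j / ‖x‖ ^ (n + 1)

/-- `ε`-truncation of the Riesz transform of `φ ∈ L²`:
`∫_{|x-y| ≥ ε} K_j(x-y) φ(y) dy`. -/
noncomputable def rieszTruncL2 {n : ℕ} (j : Fin n) (φ : EuclideanSpace ℝ (Fin n) → ℝ)
    (x : EuclideanSpace ℝ (Fin n)) (ε : ℝ) : ℝ :=
  ∫ y in {y : EuclideanSpace ℝ (Fin n) | ε ≤ dist x y}, rieszK n j (x - y) * φ y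

/-- `ε`-truncation of the Riesz transform extended to `L^∞`:
`∫_{|x-y| ≥ ε} (K_j(x-y) - K_j(-y) χ_{|y| ≥ 1}(y)) φ(y) dy`. -/
noncomputable def rieszTruncLinf {n : ℕ} (j : Fin n) (φ : EuclideanSpace ℝ (Fin n) → ℝ)
    (x : EuclideanSpace ℝ (Fin n)) (ε : ℝ) : ℝ :=
  ∫ y in {y : EuclideanSpace ℝ (Fin n) | ε ≤ dist x y},
    (rieszK n j (x - y) - (if 1 ≤ ‖y‖ then rieszK n j (-y) else 0)) * φ y

/-- `g` is the principal-value Riesz transform (extended to `L^∞`) of `φ`, a.e. -/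
def IsRieszTransformLinf {n : ℕ} (j : Fin n) (φ g : EuclideanSpace ℝ (Fin n) → ℝ) : Prop :=
  ∀ᵐ x : EuclideanSpace ℝ (Fin n),
    Tendsto (fun ε => rieszTruncLinf j φ x ε) (nhdsWithin 0 (Set.Ioi 0)) (nhds (g x))

/-!
The Riesz kernel is odd, homogeneous of degree `-n` and Lipschitz on the unit sphere, and only these
properties of it matter. On a ball of radius `ρ`, cut the kernel at distance `R = M ρ`.

The far part of the singular integral varies over the ball by at most a constant times
`‖φ‖_∞ / M`, because the increments of the kernel decay like `‖x‖ ^ (-n - 1)`.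

The near part does not change when a constant is subtracted from `φ`, since the kernel has mean zero
on annuli, so it only sees the oscillation `τ` of `φ` on the concentric ball of radius `2 R`. The
annular truncations of the kernel are bounded on `L²` uniformly in the radii: by Plancherel this
amounts to a bound on their Fourier transforms, which in polar coordinates are averages over the
sphere of the sine integrals `∫ sin (s r) / r dr`. By Cauchy–Schwarz the mean of the near part is
then at most a constant times `τ M ^ (n / 2)`.

Choosing `M` large first, and then `ρ` so small that uniform continuity makes `τ M ^ (n / 2)` small,
makes the mean oscillation small; letting the inner truncation radius tend to `0` at fixed `R`
transfers the bound to the singular integral itself.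
-/

open scoped FourierTransform SchwartzMap ENNReal NNReal Topology

local notation "dim" => Module.finrank ℝ

section SineIntegral

lemma abs_integral_sinc_le_sub {a b : ℝ} (hab : a ≤ b) : |∫ u in a..b, sinc u| ≤ b - a := by
  simpa [abs_of_nonneg (sub_nonneg.2 hab)] using
    intervalIntegral.norm_integral_le_of_norm_le_const (f := sinc) (a := a) (b := b) (C := 1)
      fun u _ => by simpa using abs_sinc_le_one u

lemma abs_integral_sinc_le_two_div {a b : ℝ} (ha : 0 < a) (hab : a ≤ b) :
    |∫ u in a..b, sinc u| ≤ 2 / a := by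
  have hpos : ∀ u ∈ Icc a b, 0 < u := fun u hu => ha.trans_le hu.1
  have hint : IntegrableOn sinc (Icc a b) := continuous_sinc.integrableOn_Icc
  have hcont : ∀ σ : ℝ, ContinuousOn (fun u => (σ - cos u) / u) (Icc a b) := fun σ =>
    ContinuousOn.div (by fun_prop) continuousOn_id fun u hu => (hpos u hu).ne'
  have hderiv : ∀ σ : ℝ, ∀ u ∈ Ioo a b, HasDerivWithinAt (fun u => (σ - cos u) / u)
      (sinc u - (σ - cos u) / u ^ 2) (Ioi u) u := fun σ u hu => by
    have hu0 : u ≠ 0 := (hpos u (Ioo_subset_Icc_self hu)).ne'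
    convert! (((hasDerivAt_cos u).const_sub σ).div (hasDerivAt_id u) hu0).hasDerivWithinAt using 1
    simp only [sinc_of_ne_zero hu0, id]
    field_simp
  -- `sinc` lies between the derivatives of `(1 - cos u) / u` and of `(-1 - cos u) / u`.
  have lower := intervalIntegral.sub_le_integral_of_hasDeriv_right_of_le hab (hcont 1) (hderiv 1)
    hint fun u _ => sub_le_self _ (div_nonneg (by linarith [cos_le_one u]) (sq_nonneg u))
  have upper := intervalIntegral.integral_le_sub_of_hasDeriv_right_of_le hab (hcont (-1))
    (hderiv (-1)) hint fun u _ => by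
      linarith [div_nonpos_of_nonpos_of_nonneg (by linarith [neg_one_le_cos u] : -1 - cos u ≤ 0)
        (sq_nonneg u)]
  have hb : 0 < b := ha.trans_le hab
  have h₁ : 0 ≤ (1 - cos b) / b := div_nonneg (by linarith [cos_le_one b]) hb.le
  have h₂ : (1 - cos a) / a ≤ 2 / a := by gcongr; linarith [neg_one_le_cos a]
  have h₃ : (-1 - cos b) / b ≤ 0 :=
    div_nonpos_of_nonpos_of_nonneg (by linarith [neg_one_le_cos b]) hb.le
  have h₄ : -(2 / a) ≤ (-1 - cos a) / a := by
    rw [← neg_div]; gcongr; linarith [cos_le_one a]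
  exact abs_le.2 ⟨by linarith, by linarith⟩

lemma abs_integral_sinc_le_three {a b : ℝ} (ha : 0 ≤ a) (hab : a ≤ b) :
    |∫ u in a..b, sinc u| ≤ 3 := by
  rcases le_total b 1 with hb | hb
  · linarith [abs_integral_sinc_le_sub hab]
  rcases le_total 1 a with ha' | ha'
  · exact (abs_integral_sinc_le_two_div (by linarith) hab).trans
      ((div_le_self zero_le_two ha').trans (by norm_num))
  rw [← intervalIntegral.integral_add_adjacent_intervals
    (continuous_sinc.intervalIntegrable a 1) (continuous_sinc.intervalIntegrable 1 b)]
  linarith [abs_add_le (∫ u in a..1, sinc u) (∫ u in 1..b, sinc u), abs_integral_sinc_le_sub ha',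
    abs_integral_sinc_le_two_div one_pos hb]

lemma abs_integral_sin_mul_div_le_three (s : ℝ) {a b : ℝ} (ha : 0 ≤ a) (hab : a ≤ b) :
    |∫ r in a..b, sin (s * r) / r| ≤ 3 := by
  have pos_case : ∀ s > 0, |∫ r in a..b, sin (s * r) / r| ≤ 3 := fun s hs => by
    have hsin : ∀ᵐ r, sin (s * r) / r = s * sinc (s * r) := by
      filter_upwards [Measure.ae_ne volume 0] with r hr
      rw [sinc_of_ne_zero (mul_ne_zero hs.ne' hr)]
      field_simp
    rw [intervalIntegral.integral_congr_ae (hsin.mono fun r hr _ => hr),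
      intervalIntegral.integral_const_mul, intervalIntegral.mul_integral_comp_mul_left]
    exact abs_integral_sinc_le_three (by positivity) (by gcongr)
  rcases lt_trichotomy s 0 with hs | rfl | hs
  · simpa [neg_div] using pos_case (-s) (neg_pos.2 hs)
  · simp
  · exact pos_case s hs

end SineIntegral

section Polar

variable {E F : Type*} [NormedAddCommGroup E] [NormedSpace ℝ E] [FiniteDimensional ℝ E]
  [Nontrivial E] [MeasurableSpace E] [BorelSpace E] [NormedAddCommGroup F] [NormedSpace ℝ F]

lemma integral_volumeIoiPow (k : ℕ) (f : ℝ → F) :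
    ∫ r, f r ∂Measure.volumeIoiPow k = ∫ r in Ioi 0, r ^ k • f r := by
  simp only [Measure.volumeIoiPow, ENNReal.ofReal]
  rw [integral_withDensity_eq_integral_smul (measurable_subtype_coe.pow_const k).real_toNNReal,
    integral_subtype_comap measurableSet_Ioi fun r => Real.toNNReal (r ^ k) • f r]
  refine setIntegral_congr_fun measurableSet_Ioi fun r hr => ?_
  simp only [NNReal.smul_def, Real.coe_toNNReal _ (pow_nonneg (mem_Ioi.1 hr).le k)]

lemma integral_eq_integral_toSphere_integral_Ioi (μ : Measure E) [μ.IsAddHaarMeasure] {f : E → F}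
    (hf : Integrable f μ) :
    ∫ x, f x ∂μ = ∫ θ : Metric.sphere (0 : E) 1,
      (∫ r in Ioi (0 : ℝ), r ^ (dim E - 1) • f (r • (θ : E))) ∂μ.toSphere := by
  have hpres := μ.measurePreserving_homeomorphUnitSphereProd
  have hemb := (homeomorphUnitSphereProd E).measurableEmbedding
  let G : Metric.sphere (0 : E) 1 × Ioi (0 : ℝ) → F := fun p => f ((p.2 : ℝ) • (p.1 : E))
  have hG : ∀ x : ({0}ᶜ : Set E), G (homeomorphUnitSphereProd E x) = f x := fun x => by
    have hx : ‖(x : E)‖ ≠ 0 := norm_ne_zero_iff.2 x.2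
    simp [G, smul_smul, hx]
  have hGint : Integrable G (μ.toSphere.prod (.volumeIoiPow (dim E - 1))) := by
    have hres : IntegrableOn f ({0}ᶜ : Set E) μ := hf.integrableOn
    rw [integrableOn_iff_comap_subtypeVal (measurableSet_singleton _).compl] at hres
    rw [← hpres.integrable_comp_emb hemb]
    exact hres.congr (ae_of_all _ fun x => (hG x).symm)
  calc ∫ x, f x ∂μ = ∫ x : ({0}ᶜ : Set E), f x ∂(μ.comap (↑)) := by
        rw [integral_subtype_comap (measurableSet_singleton _).compl f, restrict_compl_singleton]
    _ = ∫ p, G p ∂μ.toSphere.prod (.volumeIoiPow (dim E - 1)) := by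
        rw [← hpres.integral_comp hemb]
        simp only [hG]
    _ = _ := by
        rw [integral_prod _ hGint]
        exact integral_congr_ae (ae_of_all _ fun θ =>
          integral_volumeIoiPow _ fun r => f (r • (θ : E)))

end Polar

section Plancherel

variable {E F : Type*} [NormedAddCommGroup E] [InnerProductSpace ℝ E] [FiniteDimensional ℝ E]
  [MeasurableSpace E] [BorelSpace E] [NormedAddCommGroup F] [InnerProductSpace ℂ F]
  [CompleteSpace F]

lemma fourier_toLp_two_ae_eq {f : E → F} (h₁ : Integrable f) (h₂ : MemLp f 2) :
    (𝓕 (h₂.toLp f) : Lp F 2 (volume : Measure E)) =ᵐ[volume] 𝓕 f := by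
  have hcont : Continuous (𝓕 f) :=
    VectorFourier.fourierIntegral_continuous Real.continuous_fourierChar continuous_inner h₁
  refine ae_eq_of_integral_contDiff_smul_eq ((Lp.memLp _).locallyIntegrable one_le_two)
    hcont.locallyIntegrable fun g hg hgc => ?_
  have hgc' : HasCompactSupport (fun x => (g x : ℂ)) :=
    hgc.comp_left (g := ((↑) : ℝ → ℂ)) Complex.ofReal_zero
  let G : 𝓢(E, ℂ) := hgc'.toSchwartzMap (Complex.ofRealCLM.contDiff.comp hg)
  have hG : ∀ x, G x = (g x : ℂ) := fun _ => rfl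
  have hdual := congrArg (fun T => T G) (Lp.fourier_toTemperedDistribution_eq (h₂.toLp f))
  simp only [TemperedDistribution.fourier_apply, Lp.toTemperedDistribution_apply] at hdual
  calc ∫ x, g x • (𝓕 (h₂.toLp f) : Lp F 2 (volume : Measure E)) x
      = ∫ x, G x • (𝓕 (h₂.toLp f) : Lp F 2 (volume : Measure E)) x := by
        simp only [hG, Complex.coe_smul]
    _ = ∫ x, (𝓕 G) x • (h₂.toLp f) x := hdual.symm
    _ = ∫ x, 𝓕 (G : E → ℂ) x • f x := by
        refine integral_congr_ae (h₂.coeFn_toLp.mono fun x hx => ?_)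
        simp only [hx, SchwartzMap.fourier_coe]
    _ = ∫ ξ, G ξ • 𝓕 f ξ := by
        simpa using! VectorFourier.integral_fourierIntegral_smul_eq_flip (L := innerₗ E)
          Real.continuous_fourierChar continuous_inner G.integrable h₁
    _ = ∫ ξ, g ξ • 𝓕 f ξ := by simp only [hG, Complex.coe_smul]

theorem eLpNorm_fourier_eq {f : E → F} (h₁ : Integrable f) (h₂ : MemLp f 2) :
    eLpNorm (𝓕 f) 2 volume = eLpNorm f 2 volume := by
  rw [← eLpNorm_congr_ae (fourier_toLp_two_ae_eq h₁ h₂), ← eLpNorm_congr_ae h₂.coeFn_toLp,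
    ← Lp.enorm_def, ← Lp.enorm_def]
  exact (Lp.fourierTransformₗᵢ E F).enorm_map (h₂.toLp f)

end Plancherel

lemma memLp_two_of_integrable_of_norm_le {α F : Type*} [MeasurableSpace α] {μ : Measure α}
    [NormedAddCommGroup F] {f : α → F} {M : ℝ} (hf : Integrable f μ) (hM : ∀ᵐ x ∂μ, ‖f x‖ ≤ M) :
    MemLp f 2 μ := by
  rw [memLp_two_iff_integrable_sq_norm hf.1]
  simpa only [sq] using hf.norm.mul_bdd hf.1.norm (hM.mono fun x hx => by rwa [norm_norm])

section Convolution

variable {E : Type*} [NormedAddCommGroup E] [InnerProductSpace ℝ E] [FiniteDimensional ℝ E]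
  [MeasurableSpace E] [BorelSpace E]

lemma eLpNorm_convolution_le_of_norm_fourier_le {k f : E → ℂ} {M A : ℝ} (hk : Integrable k)
    (hM : ∀ x, ‖k x‖ ≤ M) (hA : ∀ ξ, ‖𝓕 k ξ‖ ≤ A) (h₁ : Integrable f) (h₂ : MemLp f 2) :
    eLpNorm (fun x => ∫ y, k (x - y) * f y) 2 volume ≤ ENNReal.ofReal A * eLpNorm f 2 volume := by
  have hconv : (fun x => ∫ y, k (x - y) * f y) =
      convolution k f (ContinuousLinearMap.mul ℂ ℂ) volume := by
    ext x
    simp [convolution_eq_swap]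
  rw [hconv]
  have i₁ : Integrable (convolution k f (ContinuousLinearMap.mul ℂ ℂ) volume) :=
    hk.integrable_convolution _ h₁
  have i₂ : MemLp (convolution k f (ContinuousLinearMap.mul ℂ ℂ) volume) 2 := by
    refine memLp_two_of_integrable_of_norm_le i₁ (M := M * ∫ y, ‖f y‖) (ae_of_all _ fun x => ?_)
    rw [← hconv, ← integral_const_mul]
    refine norm_integral_le_of_norm_le (h₁.norm.const_mul M) (ae_of_all _ fun y => ?_)
    rw [norm_mul]
    gcongr
    exact hM _
  rw [← eLpNorm_fourier_eq i₁ i₂, ← eLpNorm_fourier_eq h₁ h₂]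
  refine eLpNorm_le_mul_eLpNorm_of_ae_le_mul (ae_of_all _ fun ξ => ?_) 2
  rw [Real.fourier_mul_convolution_eq hk h₁, norm_mul]
  gcongr
  exact hA ξ

end Convolution

section Odd

lemma integral_eq_zero_of_odd {G F : Type*} [MeasurableSpace G] [AddGroup G] [MeasurableNeg G]
    [NormedAddCommGroup F] [NormedSpace ℝ F] {μ : Measure G} [μ.IsNegInvariant] {f : G → F}
    (hf : Function.Odd f) : ∫ x, f x ∂μ = 0 := by
  have : IsAddTorsionFree F := .of_isTorsionFree ℝ F
  refine self_eq_neg.1 ?_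
  rw [← integral_neg, ← integral_neg_eq_self]
  simp only [hf _]

lemma fourier_ofReal_of_odd {E : Type*} [NormedAddCommGroup E] [InnerProductSpace ℝ E]
    [FiniteDimensional ℝ E] [MeasurableSpace E] [BorelSpace E] {k : E → ℝ} (hk : Integrable k)
    (hodd : Function.Odd k) (ξ : E) :
    𝓕 (fun x => (k x : ℂ)) ξ = -Complex.I * ∫ x, k x * sin (2 * π * inner ℝ x ξ) := by
  have hcos : Integrable fun x => k x * cos (2 * π * inner ℝ x ξ) :=
    hk.mul_bdd (c := 1) (by fun_prop) (ae_of_all _ fun x => abs_cos_le_one _)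
  have hsin : Integrable fun x => k x * sin (2 * π * inner ℝ x ξ) :=
    hk.mul_bdd (c := 1) (by fun_prop) (ae_of_all _ fun x => abs_sin_le_one _)
  have hcos_zero : ∫ x, k x * cos (2 * π * inner ℝ x ξ) = 0 :=
    integral_eq_zero_of_odd fun x => by simp [hodd x]
  calc 𝓕 (fun x => (k x : ℂ)) ξ
      = ∫ x, (((k x * cos (2 * π * inner ℝ x ξ) : ℝ) : ℂ) +
          -Complex.I * (k x * sin (2 * π * inner ℝ x ξ) : ℝ)) := by
        rw [Real.fourier_eq']
        refine integral_congr_ae (ae_of_all _ fun x => ?_)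
        simp only [smul_eq_mul, Complex.exp_ofReal_mul_I]
        push_cast
        rw [neg_mul, neg_mul, Complex.cos_neg, Complex.sin_neg]
        ring
    _ = -Complex.I * ∫ x, k x * sin (2 * π * inner ℝ x ξ) := by
        rw [integral_add hcos.ofReal (hsin.ofReal.const_mul _), integral_const_mul,
          integral_complex_ofReal, integral_complex_ofReal, hcos_zero, Complex.ofReal_zero,
          zero_add]

end Odd

lemma abs_inv_norm_pow_sub_inv_norm_pow_le {E : Type*} [NormedAddCommGroup E]
    (n : ℕ) {x u : E} (hu : u ≠ 0) (hxu : ‖x - u‖ ≤ ‖u‖ / 2) :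
    |(‖x‖ ^ n)⁻¹ - (‖u‖ ^ n)⁻¹| ≤ n * 2 ^ n * ‖x - u‖ / ‖u‖ ^ (n + 1) := by
  have hu' : 0 < ‖u‖ := norm_pos_iff.2 hu
  have hx : ‖u‖ / 2 ≤ ‖x‖ := by linarith [norm_sub_norm_le u x, norm_sub_rev x u]
  have hx' : 0 < ‖x‖ := by linarith
  have hinv : ‖x‖⁻¹ ≤ 2 / ‖u‖ := by simpa using inv_anti₀ (half_pos hu') hx
  have hmax : max |‖x‖⁻¹| |‖u‖⁻¹| ≤ 2 / ‖u‖ := by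
    rw [abs_of_pos (inv_pos.2 hx'), abs_of_pos (inv_pos.2 hu')]
    exact max_le hinv (by rw [inv_eq_one_div]; gcongr; norm_num)
  have hsub : |‖x‖⁻¹ - ‖u‖⁻¹| ≤ 2 * ‖x - u‖ / ‖u‖ ^ 2 := by
    rw [inv_sub_inv hx'.ne' hu'.ne', abs_div, abs_of_pos (mul_pos hx' hu'), abs_sub_comm]
    calc |‖x‖ - ‖u‖| / (‖x‖ * ‖u‖) ≤ ‖x - u‖ / (‖u‖ / 2 * ‖u‖) := by
          gcongr
          exact abs_norm_sub_norm_le x u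
      _ = 2 * ‖x - u‖ / ‖u‖ ^ 2 := by field_simp
  rw [← inv_pow, ← inv_pow]
  calc |‖x‖⁻¹ ^ n - ‖u‖⁻¹ ^ n|
      ≤ |‖x‖⁻¹ - ‖u‖⁻¹| * n * max |‖x‖⁻¹| |‖u‖⁻¹| ^ (n - 1) := abs_pow_sub_pow_le _ _ _
    _ ≤ 2 * ‖x - u‖ / ‖u‖ ^ 2 * n * (2 / ‖u‖) ^ (n - 1) := by gcongr
    _ = n * 2 ^ n * ‖x - u‖ / ‖u‖ ^ (n + 1) := by
        rcases n with _ | m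
        · simp
        · rw [Nat.add_sub_cancel, div_pow]
          field_simp
          ring

section SingularKernel

open NormedSpace (normalize norm_normalize norm_smul_normalize)

variable {E : Type*} [NormedAddCommGroup E] [NormedSpace ℝ E]

lemma norm_normalize_sub_normalize_le {x u : E} (hx : x ≠ 0) (hu : u ≠ 0) :
    ‖normalize x - normalize u‖ ≤ 2 * ‖x - u‖ / ‖u‖ := by
  have hx' : 0 < ‖x‖ := norm_pos_iff.2 hx
  have hu' : 0 < ‖u‖ := norm_pos_iff.2 hu
  have hsplit : normalize x - normalize u = (‖x‖⁻¹ - ‖u‖⁻¹) • x + ‖u‖⁻¹ • (x - u) := by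
    simp only [NormedSpace.normalize]
    module
  have hinv : |‖x‖⁻¹ - ‖u‖⁻¹| * ‖x‖ ≤ ‖x - u‖ / ‖u‖ := by
    rw [inv_sub_inv hx'.ne' hu'.ne', abs_div, abs_of_pos (mul_pos hx' hu'), div_mul_eq_mul_div,
      mul_comm ‖x‖, mul_div_mul_right _ _ hx'.ne', abs_sub_comm]
    gcongr
    exact abs_norm_sub_norm_le x u
  calc ‖normalize x - normalize u‖ ≤ |‖x‖⁻¹ - ‖u‖⁻¹| * ‖x‖ + ‖u‖⁻¹ * ‖x - u‖ := by
        rw [hsplit]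
        refine (norm_add_le _ _).trans_eq ?_
        rw [norm_smul, norm_smul, norm_inv, norm_norm, Real.norm_eq_abs]
    _ ≤ ‖x - u‖ / ‖u‖ + ‖x - u‖ / ‖u‖ := by gcongr; rw [inv_mul_eq_div]
    _ = 2 * ‖x - u‖ / ‖u‖ := by ring

/-- The kernels of Calderón–Zygmund operators of Riesz type: odd functions, homogeneous of degree
`-dim E`, whose restriction to the unit sphere is `L`-Lipschitz. -/
structure IsOddSingularKernel (K : E → ℝ) (L : ℝ≥0) : Prop where
  odd : Function.Odd K
  homogeneous : ∀ r > 0, ∀ x, K (r • x) = (r ^ dim E)⁻¹ * K x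
  lipschitzOnWith : LipschitzOnWith L K (Metric.sphere 0 1)

namespace IsOddSingularKernel

variable {K : E → ℝ} {L : ℝ≥0} (hK : IsOddSingularKernel K L)
include hK

lemma map_zero : K 0 = 0 := hK.odd.map_zero

lemma eq_inv_pow_mul_normalize {x : E} (hx : x ≠ 0) :
    K x = (‖x‖ ^ dim E)⁻¹ * K (normalize x) := by
  rw [← hK.homogeneous ‖x‖ (norm_pos_iff.2 hx), norm_smul_normalize]

lemma abs_le_of_norm_eq_one {θ : E} (hθ : ‖θ‖ = 1) : |K θ| ≤ L := by
  have h := hK.lipschitzOnWith.dist_le_mul θ (by simpa using hθ) (-θ) (by simpa using hθ)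
  rw [hK.odd, Real.dist_eq, sub_neg_eq_add, dist_eq_norm, sub_neg_eq_add, ← two_mul, ← two_smul ℝ θ,
    norm_smul, abs_mul, hθ, Real.norm_eq_abs, abs_two] at h
  linarith

lemma abs_le_div_norm_pow (x : E) : |K x| ≤ L / ‖x‖ ^ dim E := by
  rcases eq_or_ne x 0 with rfl | hx
  · rw [hK.map_zero, abs_zero]
    positivity
  · rw [hK.eq_inv_pow_mul_normalize hx, abs_mul, abs_of_nonneg (by positivity), inv_mul_eq_div]
    gcongr
    exact hK.abs_le_of_norm_eq_one (norm_normalize hx)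

lemma abs_sub_le {x u : E} (hu : u ≠ 0) (hxu : ‖x - u‖ ≤ ‖u‖ / 2) :
    |K x - K u| ≤ L * (dim E * 2 ^ dim E + 2) * ‖x - u‖ / ‖u‖ ^ (dim E + 1) := by
  have hu' : 0 < ‖u‖ := norm_pos_iff.2 hu
  have hx : x ≠ 0 := by
    rintro rfl
    rw [zero_sub, norm_neg] at hxu
    linarith
  have hlip : |K (normalize x) - K (normalize u)| ≤ L * (2 * ‖x - u‖ / ‖u‖) := by
    refine (hK.lipschitzOnWith.dist_le_mul _ (by simpa using norm_normalize hx) _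
      (by simpa using norm_normalize hu)).trans ?_
    rw [dist_eq_norm]
    gcongr
    exact norm_normalize_sub_normalize_le hx hu
  calc |K x - K u|
      = |((‖x‖ ^ dim E)⁻¹ - (‖u‖ ^ dim E)⁻¹) * K (normalize x)
          + (‖u‖ ^ dim E)⁻¹ * (K (normalize x) - K (normalize u))| := by
        rw [hK.eq_inv_pow_mul_normalize hx, hK.eq_inv_pow_mul_normalize hu]
        ring_nf
    _ ≤ |(‖x‖ ^ dim E)⁻¹ - (‖u‖ ^ dim E)⁻¹| * |K (normalize x)|
          + (‖u‖ ^ dim E)⁻¹ * |K (normalize x) - K (normalize u)| := by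
        refine (abs_add_le _ _).trans_eq ?_
        rw [abs_mul, abs_mul, abs_of_pos (inv_pos.2 (pow_pos hu' _))]
    _ ≤ dim E * 2 ^ dim E * ‖x - u‖ / ‖u‖ ^ (dim E + 1) * L
          + (‖u‖ ^ dim E)⁻¹ * (L * (2 * ‖x - u‖ / ‖u‖)) := by
        gcongr
        · exact abs_inv_norm_pow_sub_inv_norm_pow_le _ hu hxu
        · exact hK.abs_le_of_norm_eq_one (norm_normalize hx)
    _ = L * (dim E * 2 ^ dim E + 2) * ‖x - u‖ / ‖u‖ ^ (dim E + 1) := by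
        field_simp
        ring

lemma continuousOn_compl_zero : ContinuousOn K {0}ᶜ := by
  have hnorm : ContinuousOn (fun x : E => ‖x‖⁻¹) {0}ᶜ :=
    continuous_norm.continuousOn.inv₀ fun x hx => norm_ne_zero_iff.2 hx
  refine ContinuousOn.congr (f := fun x => (‖x‖ ^ dim E)⁻¹ * K (normalize x)) ?_
    fun x hx => hK.eq_inv_pow_mul_normalize hx
  simp only [← inv_pow]
  exact (hnorm.pow _).mul (hK.lipschitzOnWith.continuousOn.comp (hnorm.smul continuousOn_id)
    fun x hx => by simpa using norm_normalize hx)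

lemma measurable [MeasurableSpace E] [BorelSpace E] : Measurable K :=
  measurable_of_continuousOn_compl_singleton 0 hK.continuousOn_compl_zero

end IsOddSingularKernel

end SingularKernel

section Truncation

open Metric

variable {E : Type*} [NormedAddCommGroup E] {K : E → ℝ} {ε R : ℝ}

/-- The kernel `K` restricted to `ε ≤ ‖x‖`. -/
noncomputable def farKernel (K : E → ℝ) (ε : ℝ) : E → ℝ := (ball 0 ε)ᶜ.indicator K

/-- The kernel `K` restricted to the annulus `ε ≤ ‖x‖ < R`. -/
noncomputable def annularKernel (K : E → ℝ) (ε R : ℝ) : E → ℝ := (ball 0 R \ ball 0 ε).indicator K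

lemma farKernel_of_le {x : E} (hx : ε ≤ ‖x‖) : farKernel K ε x = K x :=
  indicator_of_mem (by simpa using hx) K

lemma farKernel_of_lt {x : E} (hx : ‖x‖ < ε) : farKernel K ε x = 0 :=
  indicator_of_notMem (by simpa using hx) K

lemma annularKernel_of_le {x : E} (hx : R ≤ ‖x‖) : annularKernel K ε R x = 0 :=
  indicator_of_notMem (fun h => (mem_ball_zero_iff.1 h.1).not_ge hx) K

lemma annularKernel_add_farKernel (K : E → ℝ) (h : ε ≤ R) :
    annularKernel K ε R + farKernel K R = farKernel K ε := by
  refine (indicator_union_of_disjoint (disjoint_compl_right_iff_subset.2 sdiff_subset) K).symm.trans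
    (congrArg (indicator · K) ?_)
  rw [sdiff_eq, union_comm, union_inter_distrib_left, compl_union_self, univ_inter,
    union_eq_right.2 (compl_subset_compl.2 (ball_subset_ball h))]

lemma measurable_farKernel [MeasurableSpace E] [OpensMeasurableSpace E] (hK : Measurable K) :
    Measurable (farKernel K ε) :=
  hK.indicator measurableSet_ball.compl

lemma measurable_annularKernel [MeasurableSpace E] [OpensMeasurableSpace E] (hK : Measurable K) :
    Measurable (annularKernel K ε R) :=
  hK.indicator (measurableSet_ball.diff measurableSet_ball)

lemma odd_annularKernel (hK : Function.Odd K) : Function.Odd (annularKernel K ε R) := fun x => by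
  simp only [annularKernel, indicator, Set.mem_sdiff, mem_ball_zero_iff, norm_neg, hK x]
  split_ifs <;> simp

end Truncation

namespace IsOddSingularKernel

open Metric

section Bounds

variable {E : Type*} [NormedAddCommGroup E] [NormedSpace ℝ E] {K : E → ℝ} {L : ℝ≥0} {ε R : ℝ}
  (hK : IsOddSingularKernel K L)
include hK

lemma abs_farKernel_le (hε : 0 < ε) (x : E) : |farKernel K ε x| ≤ L / ε ^ dim E := by
  rcases le_or_gt ε ‖x‖ with hx | hx
  · rw [farKernel_of_le hx]
    exact (hK.abs_le_div_norm_pow x).trans (by gcongr)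
  · rw [farKernel_of_lt hx, abs_zero]
    positivity

lemma abs_annularKernel_le (hε : 0 < ε) (x : E) : |annularKernel K ε R x| ≤ L / ε ^ dim E := by
  refine le_trans ?_ (hK.abs_farKernel_le hε x)
  exact norm_indicator_le_of_subset (fun y hy => hy.2) K x

variable [MeasurableSpace E] [BorelSpace E]

lemma integrable_annularKernel [ProperSpace E] (μ : Measure E) [IsFiniteMeasureOnCompacts μ]
    (hε : 0 < ε) : Integrable (annularKernel K ε R) μ := by
  have hfin : μ (ball 0 R) ≠ ∞ := measure_ball_lt_top.ne
  have hsupp : Function.support (annularKernel K ε R) ⊆ ball 0 R :=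
    support_indicator_subset.trans sdiff_subset
  rw [← integrableOn_iff_integrable_of_support_subset hsupp]
  exact Measure.integrableOn_of_bounded hfin
    (measurable_annularKernel hK.measurable).aestronglyMeasurable
    (ae_of_all _ (hK.abs_annularKernel_le hε))

end Bounds

section Fourier

variable {E : Type*} [NormedAddCommGroup E] [InnerProductSpace ℝ E] [FiniteDimensional ℝ E]
  [Nontrivial E] {K : E → ℝ} {L : ℝ≥0} {ε R : ℝ} (hK : IsOddSingularKernel K L)
include hK

lemma integral_Ioi_annularKernel_mul_sin (hε : 0 < ε) (hR : ε ≤ R) {θ : E} (hθ : ‖θ‖ = 1) (ξ : E) :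
    ∫ r in Ioi (0 : ℝ), r ^ (dim E - 1) •
        (annularKernel K ε R (r • θ) * sin (2 * π * inner ℝ (r • θ) ξ)) =
      K θ * ∫ r in ε..R, sin ((2 * π * inner ℝ θ ξ) * r) / r := by
  rw [intervalIntegral.integral_of_le hR, ← integral_Ico_eq_integral_Ioc, ← integral_const_mul,
    ← integral_indicator measurableSet_Ioi, ← integral_indicator measurableSet_Ico]
  refine integral_congr_ae (ae_of_all _ fun r => ?_)
  rcases le_or_gt r 0 with hr | hr
  · simp only [indicator, mem_Ioi, mem_Ico, hr.not_gt, (hr.trans_lt hε).not_ge, false_and, if_false]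
  have hmem : r • θ ∈ ball 0 R \ ball 0 ε ↔ r ∈ Ico ε R := by
    simp [norm_smul, hθ, abs_of_pos hr, and_comm]
  have hdim : r ^ dim E = r ^ (dim E - 1) * r := by
    rw [← pow_succ, Nat.sub_add_cancel Module.finrank_pos]
  by_cases hrI : r ∈ Ico ε R
  · simp only [annularKernel, indicator, mem_Ioi, hr, hmem, hrI, if_true, hK.homogeneous r hr θ,
      hdim, inner_smul_left, conj_trivial, smul_eq_mul]
    field_simp
  · simp only [annularKernel, indicator, hmem, hrI, if_false, zero_mul, smul_zero, ite_self]

variable [MeasurableSpace E] [BorelSpace E]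

lemma norm_fourier_annularKernel_le (hε : 0 < ε) (hR : ε ≤ R) (ξ : E) :
    ‖𝓕 (fun x => (annularKernel K ε R x : ℂ)) ξ‖ ≤
      3 * L * (volume : Measure E).toSphere.real univ := by
  have hint := hK.integrable_annularKernel (R := R) volume hε
  have hsin : Integrable fun x : E => annularKernel K ε R x * sin (2 * π * inner ℝ x ξ) :=
    hint.mul_bdd (c := 1) (by fun_prop) (ae_of_all _ fun x => abs_sin_le_one _)
  rw [fourier_ofReal_of_odd hint (odd_annularKernel hK.odd) ξ, norm_mul, norm_neg, Complex.norm_I,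
    one_mul, Complex.norm_real, integral_eq_integral_toSphere_integral_Ioi volume hsin]
  refine norm_integral_le_of_norm_le_const (ae_of_all _ fun θ => ?_)
  have hθ : ‖(θ : E)‖ = 1 := norm_eq_of_mem_sphere θ
  rw [hK.integral_Ioi_annularKernel_mul_sin hε hR hθ ξ, norm_mul, mul_comm]
  gcongr
  · exact abs_integral_sin_mul_div_le_three _ hε.le hR
  · exact hK.abs_le_of_norm_eq_one hθ

end Fourier

end IsOddSingularKernel

section Shell

open Metric

lemma integrable_indicator_ball_sdiff_ball {X : Type*} [PseudoMetricSpace X] [ProperSpace X]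
    [MeasurableSpace X] [OpensMeasurableSpace X] (μ : Measure X) [IsFiniteMeasureOnCompacts μ]
    (x : X) (r s : ℝ) : Integrable ((ball x r \ ball x s).indicator (1 : X → ℝ)) μ :=
  (integrable_indicator_iff (measurableSet_ball.diff measurableSet_ball)).2 <|
    integrableOn_const ((measure_mono sdiff_subset).trans_lt measure_ball_lt_top).ne

variable {E : Type*} [NormedAddCommGroup E] [NormedSpace ℝ E] {R d : ℝ}

/-- The tail `‖x‖ ^ (-dim E - 1)` on `R ≤ ‖x‖`, zero elsewhere; it dominates the increments of a
singular kernel away from the origin. -/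
noncomputable def invNormPowTail (R : ℝ) : E → ℝ :=
  (ball 0 R)ᶜ.indicator fun x => (‖x‖ ^ (dim E + 1))⁻¹

lemma invNormPowTail_eq_comp_norm :
    invNormPowTail (E := E) R =
      fun x => (Ici R).indicator (fun t : ℝ => (t ^ (dim E + 1))⁻¹) ‖x‖ := by
  ext x
  simp [invNormPowTail, indicator]

variable [FiniteDimensional ℝ E] [Nontrivial E]

lemma pow_mul_indicator_Ici_eq {r : ℝ} (hr : 0 < r) :
    r ^ (dim E - 1) • (Ici R).indicator (fun t : ℝ => (t ^ (dim E + 1))⁻¹) r =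
      (Ici R).indicator (fun t : ℝ => t ^ (-2 : ℝ)) r := by
  have hdim : r ^ (dim E + 1) = r ^ (dim E - 1) * r ^ 2 := by
    rw [← pow_add]
    congr 1
    have := Module.finrank_pos (R := ℝ) (M := E)
    lia
  by_cases hrR : r ∈ Ici R
  · rw [indicator_of_mem hrR, indicator_of_mem hrR, rpow_neg hr.le, rpow_two, hdim, smul_eq_mul]
    field_simp
  · rw [indicator_of_notMem hrR, indicator_of_notMem hrR, smul_zero]

variable [MeasurableSpace E] [BorelSpace E] (μ : Measure E) [μ.IsAddHaarMeasure]

lemma integrable_invNormPowTail (hR : 0 < R) : Integrable (invNormPowTail (E := E) R) μ := by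
  rw [invNormPowTail_eq_comp_norm, integrable_fun_norm_addHaar]
  refine IntegrableOn.congr_fun ?_ (fun r hr => (pow_mul_indicator_Ici_eq hr).symm)
    measurableSet_Ioi
  refine ((integrable_indicator_iff measurableSet_Ici).2 ?_).integrableOn
  rw [integrableOn_Ici_iff_integrableOn_Ioi]
  exact integrableOn_Ioi_rpow_of_lt (by norm_num) hR

lemma integral_invNormPowTail (hR : 0 < R) :
    ∫ x, invNormPowTail (E := E) R x ∂μ = dim E * μ.real (ball 0 1) / R := by
  have hsub : Ici R ∩ Ioi 0 = Ici R := inter_eq_left.2 fun r hr => hR.trans_le hr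
  have htail : ∫ r in Ioi 0, (Ici R).indicator (fun t : ℝ => t ^ (-2 : ℝ)) r = 1 / R := by
    rw [setIntegral_indicator measurableSet_Ici, inter_comm, hsub, integral_Ici_eq_integral_Ioi,
      integral_Ioi_rpow_of_lt (by norm_num) hR]
    norm_num [rpow_neg_one]
  rw [invNormPowTail_eq_comp_norm, integral_fun_norm_addHaar,
    setIntegral_congr_fun measurableSet_Ioi fun r hr => pow_mul_indicator_Ici_eq hr, htail]
  simp only [nsmul_eq_mul, smul_eq_mul]
  ring

lemma measureReal_ball_sdiff_ball_le (hd : 0 ≤ d) (hdR : d ≤ R) :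
    μ.real (ball 0 (R + d) \ ball 0 (R - d)) ≤
      2 * d * dim E * (2 * R) ^ (dim E - 1) * μ.real (ball 0 1) := by
  have hball : ∀ r : ℝ, 0 ≤ r → μ.real (ball 0 r) = r ^ dim E * μ.real (ball 0 1) := fun r hr => by
    rw [← Measure.addHaar_real_closedBall_eq_addHaar_real_ball, μ.addHaar_real_closedBall 0 hr]
  have hpow : (R + d) ^ dim E - (R - d) ^ dim E ≤ 2 * d * dim E * (2 * R) ^ (dim E - 1) :=
    calc (R + d) ^ dim E - (R - d) ^ dim E
        ≤ |R + d - (R - d)| * dim E * max |R + d| |R - d| ^ (dim E - 1) :=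
          (le_abs_self _).trans (abs_pow_sub_pow_le _ _ _)
      _ ≤ 2 * d * dim E * (2 * R) ^ (dim E - 1) := by
          rw [abs_of_nonneg (by linarith), abs_of_nonneg (by linarith : 0 ≤ R + d),
            abs_of_nonneg (by linarith : 0 ≤ R - d), max_eq_left (by linarith)]
          have hsum : 0 ≤ R + d := by linarith
          gcongr <;> linarith
  rw [measureReal_sdiff (ball_subset_ball (by linarith)) measurableSet_ball
    measure_ball_lt_top.ne, hball (R + d) (by linarith), hball (R - d) (by linarith), ← sub_mul]
  gcongr

lemma integral_invNormPowTail_add_indicator_le (hR : 0 < R) (hd : 0 ≤ d) (hdR : d ≤ R) (a : ℝ)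
    {b : ℝ} (hb : 0 ≤ b) :
    ∫ u, (a * d * invNormPowTail R u +
        b / R ^ dim E * (ball (0 : E) (R + d) \ ball 0 (R - d)).indicator 1 u) ∂μ ≤
      dim E * μ.real (ball 0 1) * (a + b * 2 ^ dim E) * d / R := by
  have hdim : R ^ dim E = R ^ (dim E - 1) * R ∧ (2 : ℝ) ^ dim E = 2 ^ (dim E - 1) * 2 := by
    simp only [← pow_succ, Nat.sub_add_cancel (Module.finrank_pos (R := ℝ) (M := E)), true_and]
  rw [integral_add ((integrable_invNormPowTail μ hR).const_mul _)
      ((integrable_indicator_ball_sdiff_ball μ _ _ _).const_mul _),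
    integral_const_mul, integral_const_mul, integral_invNormPowTail μ hR,
    integral_indicator_one (measurableSet_ball.diff measurableSet_ball)]
  calc a * d * (dim E * μ.real (ball 0 1) / R) +
        b / R ^ dim E * μ.real (ball 0 (R + d) \ ball 0 (R - d))
      ≤ a * d * (dim E * μ.real (ball 0 1) / R) +
        b / R ^ dim E * (2 * d * dim E * (2 * R) ^ (dim E - 1) * μ.real (ball 0 1)) := by
        gcongr
        exact measureReal_ball_sdiff_ball_le μ hd hdR
    _ = dim E * μ.real (ball 0 1) * (a + b * 2 ^ dim E) * d / R := by
        rw [hdim.1, hdim.2, mul_pow]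
        field_simp

end Shell

namespace IsOddSingularKernel

section Regularity

open Metric

variable {E : Type*} [NormedAddCommGroup E] [NormedSpace ℝ E] {K : E → ℝ} {L : ℝ≥0} {R : ℝ}
  (hK : IsOddSingularKernel K L)
include hK

lemma abs_farKernel_sub_le (hR : 0 < R) {v u : E} (hvu : ‖v - u‖ ≤ R / 2) :
    |farKernel K R v - farKernel K R u| ≤
      L * (dim E * 2 ^ dim E + 2) * ‖v - u‖ * invNormPowTail R u +
        L / R ^ dim E * (ball 0 (R + ‖v - u‖) \ ball 0 (R - ‖v - u‖)).indicator 1 u := by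
  have hnorm := abs_le.1 (abs_norm_sub_norm_le v u)
  have htail : 0 ≤ invNormPowTail R u := indicator_nonneg (fun _ _ => by positivity) u
  have hshell : 0 ≤ (ball 0 (R + ‖v - u‖) \ ball 0 (R - ‖v - u‖)).indicator (1 : E → ℝ) u :=
    indicator_nonneg (fun _ _ => zero_le_one) u
  by_cases hboth : R ≤ ‖v‖ ∧ R ≤ ‖u‖
  · have hu : u ∈ (ball (0 : E) R)ᶜ := by simpa using hboth.2
    rw [farKernel_of_le hboth.1, farKernel_of_le hboth.2, invNormPowTail, indicator_of_mem hu,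
      ← div_eq_mul_inv]
    refine (hK.abs_sub_le (norm_pos_iff.1 (hR.trans_le hboth.2)) (by linarith)).trans ?_
    exact le_add_of_nonneg_right (by positivity)
  by_cases hneither : ‖v‖ < R ∧ ‖u‖ < R
  · rw [farKernel_of_lt hneither.1, farKernel_of_lt hneither.2, sub_zero, abs_zero]
    positivity
  -- `u` and `v` lie on different sides of the sphere, so `u` is within `‖v - u‖` of it
  have hu : u ∈ ball 0 (R + ‖v - u‖) \ ball 0 (R - ‖v - u‖) := by
    simp only [Set.mem_sdiff, mem_ball_zero_iff, not_lt]
    constructor <;> by_contra! <;> grind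
  rw [indicator_of_mem hu, Pi.one_apply, mul_one]
  refine le_add_of_nonneg_of_le (by positivity) ?_
  rcases lt_or_ge ‖v‖ R with hv | hv
  · rw [farKernel_of_lt hv, zero_sub, abs_neg]
    exact hK.abs_farKernel_le hR u
  · rw [farKernel_of_lt (by grind : ‖u‖ < R), sub_zero]
    exact hK.abs_farKernel_le hR v

variable [FiniteDimensional ℝ E] [Nontrivial E] [MeasurableSpace E] [BorelSpace E] (μ : Measure E)
  [μ.IsAddHaarMeasure]

theorem exists_integral_abs_farKernel_sub_le : ∃ W ≥ 0, ∀ R > 0, ∀ x c : E, ‖x - c‖ ≤ R / 2 →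
    Integrable (fun y => farKernel K R (x - y) - farKernel K R (c - y)) μ ∧
      ∫ y, |farKernel K R (x - y) - farKernel K R (c - y)| ∂μ ≤ W * ‖x - c‖ / R := by
  refine ⟨dim E * μ.real (ball 0 1) * (L * (dim E * 2 ^ dim E + 2) + L * 2 ^ dim E), by positivity,
    fun R hR x c hxc => ?_⟩
  let G : E → ℝ := fun u => L * (dim E * 2 ^ dim E + 2) * ‖x - c‖ * invNormPowTail R u +
    L / R ^ dim E * (ball 0 (R + ‖x - c‖) \ ball 0 (R - ‖x - c‖)).indicator 1 u
  have hG : Integrable (fun y => G (c - y)) μ :=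
    (((integrable_invNormPowTail μ hR).const_mul _).add
      ((integrable_indicator_ball_sdiff_ball μ _ _ _).const_mul _)).comp_sub_left c
  have hle : ∀ y, ‖farKernel K R (x - y) - farKernel K R (c - y)‖ ≤ G (c - y) := fun y => by
    have h := hK.abs_farKernel_sub_le (v := x - y) (u := c - y) hR
    rw [sub_sub_sub_cancel_right] at h
    exact h hxc
  have hmeas := measurable_farKernel (ε := R) hK.measurable
  refine ⟨hG.mono' (by fun_prop) (ae_of_all _ hle), ?_⟩
  calc ∫ y, |farKernel K R (x - y) - farKernel K R (c - y)| ∂μ ≤ ∫ y, G (c - y) ∂μ :=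
        integral_mono_of_nonneg (ae_of_all _ fun y => abs_nonneg _) hG (ae_of_all _ hle)
    _ = ∫ u, G u ∂μ := integral_sub_left_eq_self G μ c
    _ ≤ _ := integral_invNormPowTail_add_indicator_le μ hR (norm_nonneg _) (by linarith) _ L.2

end Regularity

end IsOddSingularKernel

section SingularIntegral

open Metric

variable {E : Type*} [NormedAddCommGroup E] [InnerProductSpace ℝ E] [FiniteDimensional ℝ E]
  [MeasurableSpace E] [BorelSpace E]

/-- The truncation `∫_{|x - y| ≥ ε} (K(x - y) - K(-y) χ_{|y| ≥ 1}(y)) φ(y) dy` of the singular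
integral of `φ ∈ L^∞` with kernel `K`. -/
noncomputable def truncatedSingularIntegral (K φ : E → ℝ) (x : E) (ε : ℝ) : ℝ :=
  ∫ y in {y | ε ≤ dist x y}, (K (x - y) - (if 1 ≤ ‖y‖ then K (-y) else 0)) * φ y

/-- `g` is, almost everywhere, the principal-value singular integral of `φ ∈ L^∞` with kernel `K`,
normalized by subtracting `K(-y) χ_{|y| ≥ 1}(y)` from the kernel. -/
def IsSingularIntegral (K φ g : E → ℝ) : Prop :=
  ∀ᵐ x, Tendsto (truncatedSingularIntegral K φ x) (𝓝[>] 0) (𝓝 (g x))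

/-- The truncation of the singular integral that keeps the correction `K(-y) χ_{|y| ≥ 1}(y)` on all
of `E`: the integrals at different levels and points then differ by integrals of `φ` against
integrable kernels. -/
noncomputable def regularizedSingularIntegral (K φ : E → ℝ) (ε : ℝ) (x : E) : ℝ :=
  ∫ y, (farKernel K ε (x - y) - farKernel K 1 (-y)) * φ y

lemma aestronglyMeasurable_regularizedSingularIntegral {K φ : E → ℝ} (hK : Measurable K)
    (hφ : AEStronglyMeasurable φ) (ε : ℝ) :
    AEStronglyMeasurable (regularizedSingularIntegral K φ ε) := by
  have hfar : ∀ r, Measurable (farKernel K r) := fun r => measurable_farKernel hK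
  have hker : Measurable fun p : E × E => farKernel K ε (p.1 - p.2) - farKernel K 1 (-p.2) := by
    fun_prop
  exact (hker.aestronglyMeasurable.mul hφ.comp_snd).integral_prod_right'

end SingularIntegral

namespace IsOddSingularKernel

open Metric

section Integrability

variable {E : Type*} [NormedAddCommGroup E] [NormedSpace ℝ E] [FiniteDimensional ℝ E]
  [MeasurableSpace E] [BorelSpace E] {μ : Measure E} [μ.IsAddHaarMeasure] {K φ : E → ℝ} {L : ℝ≥0}
  {B ε r R : ℝ} {c x : E} (hK : IsOddSingularKernel K L)
include hK

lemma integral_annularKernel_mul_eq (hφ : AEStronglyMeasurable φ μ) (hb : ∀ᵐ y ∂μ, |φ y| ≤ B)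
    (hε : 0 < ε) (hxc : ‖x - c‖ ≤ R) (a : ℝ) :
    ∫ y, annularKernel K ε R (x - y) * φ y ∂μ =
      ∫ y, annularKernel K ε R (x - y) * (ball c (2 * R)).indicator (fun y => φ y - a) y ∂μ := by
  have hint : Integrable (fun y => annularKernel K ε R (x - y)) μ :=
    (hK.integrable_annularKernel μ hε).comp_sub_left x
  have hmean : ∫ y, annularKernel K ε R (x - y) ∂μ = 0 := by
    rw [integral_sub_left_eq_self (annularKernel K ε R) μ x]
    exact integral_eq_zero_of_odd (odd_annularKernel hK.odd)
  calc ∫ y, annularKernel K ε R (x - y) * φ y ∂μ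
      = ∫ y, (annularKernel K ε R (x - y) * φ y - annularKernel K ε R (x - y) * a) ∂μ := by
        rw [integral_sub (hint.mul_bdd hφ hb) (hint.mul_const a), integral_mul_const, hmean,
          zero_mul, sub_zero]
    _ = ∫ y, annularKernel K ε R (x - y) * (ball c (2 * R)).indicator (fun y => φ y - a) y ∂μ := by
        refine integral_congr_ae (ae_of_all _ fun y => ?_)
        by_cases hy : y ∈ ball c (2 * R)
        · simp only [indicator_of_mem hy, mul_sub]
        · have hxy : R ≤ ‖x - y‖ := by
            rw [mem_ball_iff_norm', not_lt] at hy
            linarith [norm_sub_le_norm_sub_add_norm_sub c x y, norm_sub_rev c x]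
          simp only [annularKernel_of_le hxy, zero_mul, sub_zero]

variable (μ) in
lemma integrable_farKernel_sub [Nontrivial E] (hε : 0 < ε) (hr : 0 < r) (x c : E) :
    Integrable (fun y => farKernel K ε (x - y) - farKernel K r (c - y)) μ := by
  obtain ⟨W, -, hW⟩ := hK.exists_integral_abs_farKernel_sub_le μ
  let R : ℝ := max ε (max r (2 * ‖x - c‖))
  have hεR : ε ≤ R := le_max_left _ _
  have hrR : r ≤ R := (le_max_left _ _).trans (le_max_right _ _)
  have hxc : 2 * ‖x - c‖ ≤ R := (le_max_right _ _).trans (le_max_right _ _)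
  have hfar := (hW R (hε.trans_le hεR) x c (by linarith)).1
  have hx := (hK.integrable_annularKernel (R := R) μ hε).comp_sub_left x
  have hc := (hK.integrable_annularKernel (R := R) μ hr).comp_sub_left c
  refine ((hx.add hfar).sub hc).congr (ae_of_all _ fun y => ?_)
  simp only [← annularKernel_add_farKernel K hεR, ← annularKernel_add_farKernel K hrR,
    Pi.add_apply, Pi.sub_apply]
  ring

end Integrability

variable {E : Type*} [NormedAddCommGroup E] [InnerProductSpace ℝ E] [FiniteDimensional ℝ E]
  [Nontrivial E] [MeasurableSpace E] [BorelSpace E] {K φ g : E → ℝ} {L : ℝ≥0} {B ε R τ : ℝ}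
  {c x : E} (hK : IsOddSingularKernel K L)
include hK

lemma truncatedSingularIntegral_eq_add (hφ : AEStronglyMeasurable φ) (hb : ∀ᵐ y, |φ y| ≤ B)
    (hε : 0 < ε) (x : E) :
    truncatedSingularIntegral K φ x ε =
      regularizedSingularIntegral K φ ε x + ∫ y in ball x ε, farKernel K 1 (-y) * φ y := by
  have hset : {y | ε ≤ dist x y} = (ball x ε)ᶜ := by ext y; simp [dist_comm]
  have hfar := (hK.integrable_farKernel_sub volume hε one_pos x 0).mul_bdd hφ hb
  have hnear : ∫ y in ball x ε, (farKernel K ε (x - y) - farKernel K 1 (-y)) * φ y =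
      -∫ y in ball x ε, farKernel K 1 (-y) * φ y := by
    rw [← integral_neg]
    refine setIntegral_congr_fun measurableSet_ball fun y hy => ?_
    simp only [farKernel_of_lt (mem_ball_iff_norm'.1 hy), zero_sub, neg_mul]
  have haway : truncatedSingularIntegral K φ x ε =
      ∫ y in (ball x ε)ᶜ, (farKernel K ε (x - y) - farKernel K 1 (-y)) * φ y := by
    rw [truncatedSingularIntegral, hset]
    refine setIntegral_congr_fun measurableSet_ball.compl fun y hy => ?_
    have hy' : ε ≤ ‖x - y‖ := by simpa [dist_eq_norm'] using hy
    simp only [farKernel_of_le hy']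
    simp only [farKernel, indicator, mem_compl_iff, mem_ball_zero_iff, norm_neg, not_lt]
  simp only [zero_sub] at hfar
  rw [haway, regularizedSingularIntegral, ← integral_add_compl (measurableSet_ball (x := x)) hfar,
    hnear]
  ring

lemma tendsto_setIntegral_ball_farKernel (hb : ∀ᵐ y, |φ y| ≤ B) (x : E) :
    Tendsto (fun ε => ∫ y in ball x ε, farKernel K 1 (-y) * φ y) (𝓝[>] 0) (𝓝 0) := by
  have hbound : ∀ᵐ y, ‖farKernel K 1 (-y) * φ y‖ ≤ L * B := by
    filter_upwards [hb] with y hy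
    have hfar := hK.abs_farKernel_le one_pos (-y)
    rw [one_pow, div_one] at hfar
    rw [norm_mul]
    exact mul_le_mul hfar hy (norm_nonneg _) L.2
  have hvol : Tendsto (fun ε => L * B * (ε ^ dim E * volume.real (ball (0 : E) 1)))
      (𝓝[>] 0) (𝓝 0) := by
    refine Tendsto.mono_left (Continuous.tendsto' (by fun_prop) _ _ ?_) nhdsWithin_le_nhds
    rw [zero_pow Module.finrank_pos.ne', zero_mul, mul_zero]
  refine squeeze_zero_norm' ?_ hvol
  filter_upwards [self_mem_nhdsWithin] with ε hε
  rw [← Measure.addHaar_real_closedBall volume x (le_of_lt hε),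
    Measure.addHaar_real_closedBall_eq_addHaar_real_ball]
  exact norm_setIntegral_le_of_norm_le_const_ae measure_ball_lt_top (ae_restrict_of_ae hbound)

lemma tendsto_regularizedSingularIntegral (hφ : AEStronglyMeasurable φ) (hb : ∀ᵐ y, |φ y| ≤ B)
    (hg : IsSingularIntegral K φ g) :
    ∀ᵐ x, Tendsto (fun ε => regularizedSingularIntegral K φ ε x) (𝓝[>] 0) (𝓝 (g x)) := by
  filter_upwards [hg] with x hx
  have hlim := hx.sub (hK.tendsto_setIntegral_ball_farKernel hb x)
  rw [sub_zero] at hlim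
  refine hlim.congr' ?_
  filter_upwards [self_mem_nhdsWithin] with ε hε
  rw [hK.truncatedSingularIntegral_eq_add hφ hb hε, add_sub_cancel_right]

lemma aestronglyMeasurable_of_isSingularIntegral (hφ : AEStronglyMeasurable φ)
    (hb : ∀ᵐ y, |φ y| ≤ B) (hg : IsSingularIntegral K φ g) : AEStronglyMeasurable g :=
  aestronglyMeasurable_of_tendsto_ae (𝓝[>] 0)
    (aestronglyMeasurable_regularizedSingularIntegral hK.measurable hφ)
    (hK.tendsto_regularizedSingularIntegral hφ hb hg)

lemma abs_regularizedSingularIntegral_sub_le (hφ : AEStronglyMeasurable φ)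
    (hb : ∀ᵐ y, |φ y| ≤ B) (hε : 0 < ε) (hεR : ε ≤ R) (hxc : ‖x - c‖ ≤ R) (a : ℝ) :
    |regularizedSingularIntegral K φ ε x - regularizedSingularIntegral K φ R c| ≤
      |∫ y, annularKernel K ε R (x - y) * (ball c (2 * R)).indicator (fun y => φ y - a) y| +
        B * ∫ y, |farKernel K R (x - y) - farKernel K R (c - y)| := by
  have hR : 0 < R := hε.trans_le hεR
  have hann := ((hK.integrable_annularKernel (R := R) volume hε).comp_sub_left x).mul_bdd hφ hb
  have hfar := hK.integrable_farKernel_sub volume hR hR x c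
  have hcorr : ∀ {r}, 0 < r → ∀ z : E,
      Integrable fun y => (farKernel K r (z - y) - farKernel K 1 (-y)) * φ y := fun hr z => by
    simpa only [zero_sub] using (hK.integrable_farKernel_sub volume hr one_pos z 0).mul_bdd hφ hb
  have hsplit : regularizedSingularIntegral K φ ε x - regularizedSingularIntegral K φ R c =
      (∫ y, annularKernel K ε R (x - y) * φ y) +
        ∫ y, (farKernel K R (x - y) - farKernel K R (c - y)) * φ y := by
    rw [regularizedSingularIntegral, regularizedSingularIntegral,
      ← integral_sub (hcorr hε x) (hcorr hR c), ← integral_add hann (hfar.mul_bdd hφ hb)]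
    refine integral_congr_ae (ae_of_all _ fun y => ?_)
    simp only [← annularKernel_add_farKernel K hεR, Pi.add_apply]
    ring
  rw [hsplit, hK.integral_annularKernel_mul_eq hφ hb hε hxc a, ← integral_const_mul]
  refine (abs_add_le _ _).trans (add_le_add_right ?_ _)
  have hle : ∀ᵐ y, ‖(farKernel K R (x - y) - farKernel K R (c - y)) * φ y‖ ≤
      B * |farKernel K R (x - y) - farKernel K R (c - y)| := by
    filter_upwards [hb] with y hy
    rw [norm_mul, mul_comm]
    exact mul_le_mul_of_nonneg_right hy (abs_nonneg _)
  exact norm_integral_le_of_norm_le (hfar.abs.const_mul B) hle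

lemma eLpNorm_integral_annularKernel_mul_le (hε : 0 < ε) (hεR : ε ≤ R) {f : E → ℝ}
    (hf₁ : Integrable f) (hf₂ : MemLp f 2) :
    eLpNorm (fun x => ∫ y, annularKernel K ε R (x - y) * f y) 2 ≤
      ENNReal.ofReal (3 * L * (volume : Measure E).toSphere.real univ) * eLpNorm f 2 := by
  have hcomplex := eLpNorm_convolution_le_of_norm_fourier_le
    (hK.integrable_annularKernel (R := R) volume hε).ofReal
    (fun x => (Complex.norm_real _).trans_le (hK.abs_annularKernel_le hε x))
    (hK.norm_fourier_annularKernel_le hε hεR) hf₁.ofReal hf₂.ofReal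
  have hconv : ∀ x, ∫ y, (annularKernel K ε R (x - y) : ℂ) * (f y : ℂ) =
      (∫ y, annularKernel K ε R (x - y) * f y : ℝ) := fun x => by
    simp only [← Complex.ofReal_mul, integral_complex_ofReal]
  simp only [RCLike.ofReal_eq_complex_ofReal] at hcomplex
  have hnorm : ∀ h : E → ℝ, eLpNorm (fun x => (h x : ℂ)) 2 volume = eLpNorm h 2 volume := fun h =>
    eLpNorm_congr_norm_ae (ae_of_all _ fun x => Complex.norm_real _)
  rwa [funext hconv, hnorm, hnorm] at hcomplex

lemma eLpNorm_integral_annularKernel_mul_indicator_le (hε : 0 < ε) (hεR : ε ≤ R) {f : E → ℝ}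
    {s : Set E} (hs : MeasurableSet s) (hs_fin : volume s ≠ ∞)
    (hf : AEStronglyMeasurable f (volume.restrict s))
    (hτ : ∀ᵐ y ∂volume.restrict s, |f y| ≤ τ) :
    eLpNorm (fun x => ∫ y, annularKernel K ε R (x - y) * s.indicator f y) 2 ≤
      ENNReal.ofReal (3 * L * (volume : Measure E).toSphere.real univ) *
        (volume s ^ (1 / 2 : ℝ) * ENNReal.ofReal τ) := by
  have : IsFiniteMeasure (volume.restrict s) := isFiniteMeasure_restrict.2 hs_fin
  have hmem : ∀ p, MemLp (s.indicator f) p := fun p =>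
    (memLp_indicator_iff_restrict hs).2 (.of_bound hf τ hτ)
  refine (hK.eLpNorm_integral_annularKernel_mul_le hε hεR (memLp_one_iff_integrable.1 (hmem 1))
    (hmem 2)).trans ?_
  gcongr
  rw [eLpNorm_indicator_eq_eLpNorm_restrict hs]
  simpa using eLpNorm_le_of_ae_bound (p := 2) (f := f) hτ

end IsOddSingularKernel

section MeanOscillation

open Metric

lemma integrable_and_integral_norm_le_of_eLpNorm_two_le {α F : Type*} [MeasurableSpace α]
    [NormedAddCommGroup F] {μ : Measure α} [IsFiniteMeasure μ] {f : α → F} {b : ℝ} (hb : 0 ≤ b)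
    (hf : AEStronglyMeasurable f μ)
    (h : eLpNorm f 2 μ ≤ ENNReal.ofReal b * μ univ ^ (1 / 2 : ℝ)) :
    Integrable f μ ∧ ∫ x, ‖f x‖ ∂μ ≤ b * μ.real univ := by
  have hone : eLpNorm f 1 μ ≤ ENNReal.ofReal (b * μ.real univ) :=
    calc eLpNorm f 1 μ
        ≤ eLpNorm f 2 μ * μ univ ^ (1 / (1 : ℝ≥0∞).toReal - 1 / (2 : ℝ≥0∞).toReal) :=
          eLpNorm_le_eLpNorm_mul_rpow_measure_univ one_le_two hf
      _ ≤ ENNReal.ofReal b * μ univ ^ (1 / 2 : ℝ) * μ univ ^ (1 / 2 : ℝ) := by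
          rw [show 1 / (1 : ℝ≥0∞).toReal - 1 / (2 : ℝ≥0∞).toReal = (1 / 2 : ℝ) by norm_num]
          gcongr
      _ = ENNReal.ofReal (b * μ.real univ) := by
          rw [mul_assoc, ← ENNReal.rpow_add_of_nonneg _ _ (by norm_num) (by norm_num), add_halves,
            ENNReal.rpow_one, ENNReal.ofReal_mul hb, ofReal_measureReal]
  have hint : Integrable f μ := memLp_one_iff_integrable.1 ⟨hf, hone.trans_lt ENNReal.ofReal_lt_top⟩
  refine ⟨hint, ?_⟩
  rw [integral_norm_eq_lintegral_enorm hf, ← eLpNorm_one_eq_lintegral_enorm]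
  exact ENNReal.toReal_le_of_le_ofReal (by positivity) hone

variable {E : Type*} [NormedAddCommGroup E] [InnerProductSpace ℝ E] [FiniteDimensional ℝ E]
  [MeasurableSpace E] [BorelSpace E]

/-- The mean oscillation of `f` over `closedBall c ρ` is at most `b`, measured from some
constant instead of the mean of `f`. -/
def HasMeanOscillationLE (f : E → ℝ) (b : ℝ) (c : E) (ρ : ℝ) : Prop :=
  IntegrableOn f (closedBall c ρ) ∧
    ∃ C, ∫ x in closedBall c ρ, |f x - C| ≤ b * volume.real (closedBall c ρ)

lemma HasMeanOscillationLE.mono {f : E → ℝ} {b b' : ℝ} {c : E} {ρ : ℝ}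
    (h : HasMeanOscillationLE f b c ρ) (hb : b ≤ b') : HasMeanOscillationLE f b' c ρ :=
  h.imp_right fun ⟨C, hC⟩ => ⟨C, hC.trans (by gcongr)⟩

namespace IsOddSingularKernel

variable [Nontrivial E] {K φ g : E → ℝ} {L : ℝ≥0} {B M R w ε ρ τ : ℝ} {c : E}
  (hK : IsOddSingularKernel K L)

section
include hK

lemma eLpNorm_regularizedSingularIntegral_sub_le (hφ : AEStronglyMeasurable φ)
    (hb : ∀ᵐ y, |φ y| ≤ B) (hε : 0 < ε) (hεR : ε ≤ R) (hρ : ρ ≤ R) (a : ℝ)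
    (hτ : ∀ᵐ y ∂volume.restrict (ball c (2 * R)), |φ y - a| ≤ τ)
    (hw : ∀ x ∈ closedBall c ρ, B * ∫ y, |farKernel K R (x - y) - farKernel K R (c - y)| ≤ w) :
    eLpNorm (fun x => regularizedSingularIntegral K φ ε x - regularizedSingularIntegral K φ R c) 2
        (volume.restrict (closedBall c ρ)) ≤
      ENNReal.ofReal (3 * L * (volume : Measure E).toSphere.real univ) *
          (volume (ball c (2 * R)) ^ (1 / 2 : ℝ) * ENNReal.ofReal τ) +
        ‖w‖ₑ * volume (closedBall c ρ) ^ (1 / 2 : ℝ) := by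
  set ψ : E → ℝ := (ball c (2 * R)).indicator (fun y => φ y - a)
  set T : E → ℝ := fun x => ∫ y, annularKernel K ε R (x - y) * ψ y
  have hψ_meas : AEStronglyMeasurable ψ :=
    (hφ.sub aestronglyMeasurable_const).indicator measurableSet_ball
  have hann : Measurable (annularKernel K ε R) := measurable_annularKernel hK.measurable
  have hker : Measurable fun p : E × E => annularKernel K ε R (p.1 - p.2) := by fun_prop
  have hT_meas : AEStronglyMeasurable T :=
    (hker.aestronglyMeasurable.mul hψ_meas.comp_snd).integral_prod_right'
  have hle : ∀ᵐ x ∂volume.restrict (closedBall c ρ),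
      ‖regularizedSingularIntegral K φ ε x - regularizedSingularIntegral K φ R c‖ ≤ |T x| + w := by
    filter_upwards [ae_restrict_mem measurableSet_closedBall] with x hx
    refine (hK.abs_regularizedSingularIntegral_sub_le hφ hb hε hεR
      ((mem_closedBall_iff_norm.1 hx).trans hρ) a).trans ?_
    gcongr
    exact hw x hx
  calc eLpNorm (fun x => regularizedSingularIntegral K φ ε x - regularizedSingularIntegral K φ R c)
        2 (volume.restrict (closedBall c ρ))
      ≤ eLpNorm (fun x => |T x| + w) 2 (volume.restrict (closedBall c ρ)) :=
        eLpNorm_mono_ae_real hle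
    _ ≤ eLpNorm (fun x => |T x|) 2 (volume.restrict (closedBall c ρ)) +
          eLpNorm (fun _ => w) 2 (volume.restrict (closedBall c ρ)) :=
        eLpNorm_add_le hT_meas.restrict.norm aestronglyMeasurable_const one_le_two
    _ = eLpNorm T 2 (volume.restrict (closedBall c ρ)) +
          ‖w‖ₑ * volume (closedBall c ρ) ^ (1 / 2 : ℝ) := by
        rw [eLpNorm_const' w two_ne_zero ENNReal.ofNat_ne_top, Measure.restrict_apply_univ,
          ENNReal.toReal_ofNat]
        congr 1
        exact eLpNorm_norm T
    _ ≤ _ := by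
        gcongr
        exact (eLpNorm_restrict_le T 2 volume _).trans
          (hK.eLpNorm_integral_annularKernel_mul_indicator_le hε hεR measurableSet_ball
            measure_ball_lt_top.ne (hφ.sub aestronglyMeasurable_const).restrict hτ)

lemma eLpNorm_sub_regularizedSingularIntegral_le (hφ : AEStronglyMeasurable φ)
    (hb : ∀ᵐ y, |φ y| ≤ B) (hg : IsSingularIntegral K φ g) (hR : 0 < R) (hρ : ρ ≤ R) (a : ℝ)
    (hτ : ∀ᵐ y ∂volume.restrict (ball c (2 * R)), |φ y - a| ≤ τ)
    (hw : ∀ x ∈ closedBall c ρ, B * ∫ y, |farKernel K R (x - y) - farKernel K R (c - y)| ≤ w) :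
    eLpNorm (fun x => g x - regularizedSingularIntegral K φ R c) 2
        (volume.restrict (closedBall c ρ)) ≤
      ENNReal.ofReal (3 * L * (volume : Measure E).toSphere.real univ) *
          (volume (ball c (2 * R)) ^ (1 / 2 : ℝ) * ENNReal.ofReal τ) +
        ‖w‖ₑ * volume (closedBall c ρ) ^ (1 / 2 : ℝ) := by
  refine Lp.eLpNorm_le_of_ae_tendsto (u := 𝓝[>] 0) ?_ (fun ε =>
    ((aestronglyMeasurable_regularizedSingularIntegral hK.measurable hφ ε).restrict.sub
      aestronglyMeasurable_const))
    (ae_restrict_of_ae ((hK.tendsto_regularizedSingularIntegral hφ hb hg).mono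
      fun x hx => hx.sub_const _))
  filter_upwards [Ioc_mem_nhdsGT hR] with ε hε
  exact hK.eLpNorm_regularizedSingularIntegral_sub_le hφ hb hε.1 hε.2 hρ a hτ hw

lemma hasMeanOscillationLE (hφ : AEStronglyMeasurable φ) (hb : ∀ᵐ y, |φ y| ≤ B)
    (hg : IsSingularIntegral K φ g) (hM : 1 ≤ M) (hρ : 0 < ρ) (hτ0 : 0 ≤ τ) (hw0 : 0 ≤ w) (a : ℝ)
    (hτ : ∀ᵐ y ∂volume.restrict (ball c (2 * (M * ρ))), |φ y - a| ≤ τ)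
    (hw : ∀ x ∈ closedBall c ρ,
      B * ∫ y, |farKernel K (M * ρ) (x - y) - farKernel K (M * ρ) (c - y)| ≤ w) :
    HasMeanOscillationLE g
      (3 * L * (volume : Measure E).toSphere.real univ * τ * √((2 * M) ^ dim E) + w) c ρ := by
  have : 0 < M := one_pos.trans_le hM
  have hvol : volume (ball c (2 * (M * ρ))) =
      ENNReal.ofReal ((2 * M) ^ dim E) * volume (closedBall c ρ) := by
    rw [← mul_assoc, Measure.addHaar_ball_mul volume c (by positivity),
      Measure.addHaar_closedBall_eq_addHaar_ball, Measure.addHaar_ball_center volume c]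
  have hfin : IsFiniteMeasure (volume.restrict (closedBall c ρ)) :=
    isFiniteMeasure_restrict.2 measure_closedBall_lt_top.ne
  set A : ℝ := 3 * L * (volume : Measure E).toSphere.real univ
  have hA : 0 ≤ A := by positivity
  have heLp : eLpNorm (fun x => g x - regularizedSingularIntegral K φ (M * ρ) c) 2
      (volume.restrict (closedBall c ρ)) ≤
        ENNReal.ofReal (A * τ * √((2 * M) ^ dim E) + w) *
          volume.restrict (closedBall c ρ) univ ^ (1 / 2 : ℝ) := by
    refine (hK.eLpNorm_sub_regularizedSingularIntegral_le hφ hb hg (by positivity)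
      (le_mul_of_one_le_left hρ.le hM) a hτ hw).trans_eq ?_
    rw [hvol, Measure.restrict_apply_univ, ENNReal.mul_rpow_of_nonneg _ _ (by positivity),
      ENNReal.ofReal_rpow_of_nonneg (by positivity) (by positivity), ← sqrt_eq_rpow,
      ENNReal.ofReal_add (by positivity) hw0, ENNReal.ofReal_mul (mul_nonneg hA hτ0),
      ENNReal.ofReal_mul hA, Real.enorm_of_nonneg hw0]
    ring
  obtain ⟨hint, hle⟩ := integrable_and_integral_norm_le_of_eLpNorm_two_le (by positivity)
    ((hK.aestronglyMeasurable_of_isSingularIntegral hφ hb hg).restrict.sub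
      aestronglyMeasurable_const) heLp
  refine ⟨(hint.add (integrable_const (regularizedSingularIntegral K φ (M * ρ) c))).congr
    (ae_of_all _ fun x => sub_add_cancel _ _), regularizedSingularIntegral K φ (M * ρ) c, ?_⟩
  rwa [measureReal_restrict_apply_univ] at hle

lemma exists_hasMeanOscillationLE : ∃ A ≥ 0, ∃ W ≥ 0, ∀ {φ g : E → ℝ} {B : ℝ},
    AEStronglyMeasurable φ → (∀ᵐ y, |φ y| ≤ B) → IsSingularIntegral K φ g →
    ∀ {M ρ τ : ℝ} {a : ℝ} {c : E}, 2 ≤ M → 0 < ρ → 0 ≤ τ →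
    (∀ᵐ y ∂volume.restrict (ball c (2 * (M * ρ))), |φ y - a| ≤ τ) →
    HasMeanOscillationLE g (A * τ * √((2 * M) ^ dim E) + B * W / M) c ρ := by
  obtain ⟨W, hW, hfar⟩ := hK.exists_integral_abs_farKernel_sub_le (volume : Measure E)
  refine ⟨3 * L * (volume : Measure E).toSphere.real univ, by positivity, W, hW,
    fun {φ g B} hφ hb hg {M ρ τ a c} hM hρ hτ0 hτ => ?_⟩
  have hB : 0 ≤ B := let ⟨y, hy⟩ := hb.exists; (abs_nonneg _).trans hy
  have : 0 < M := two_pos.trans_le hM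
  refine hK.hasMeanOscillationLE hφ hb hg (one_le_two.trans hM) hρ hτ0 (by positivity) a hτ
    fun x hx => ?_
  rw [mem_closedBall_iff_norm] at hx
  calc B * ∫ y, |farKernel K (M * ρ) (x - y) - farKernel K (M * ρ) (c - y)|
      ≤ B * (W * ‖x - c‖ / (M * ρ)) := by
        gcongr
        exact (hfar (M * ρ) (by positivity) x c (by nlinarith)).2
    _ ≤ B * (W * ρ / (M * ρ)) := by gcongr
    _ = B * W / M := by field_simp

lemma exists_forall_hasMeanOscillationLE (hφ : AEStronglyMeasurable φ) (hb : ∀ᵐ y, |φ y| ≤ B)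
    (hg : IsSingularIntegral K φ g) :
    ∃ b, ∀ c, ∀ ρ > 0, HasMeanOscillationLE g b c ρ := by
  obtain ⟨A, -, W, -, hosc⟩ := hK.exists_hasMeanOscillationLE
  have hB : 0 ≤ B := let ⟨y, hy⟩ := hb.exists; (abs_nonneg _).trans hy
  exact ⟨_, fun c ρ hρ => hosc hφ hb hg (a := 0) le_rfl hρ hB <|
    ae_restrict_of_ae <| by simpa only [sub_zero] using hb⟩

lemma exists_forall_hasMeanOscillationLE_of_uniformContinuous (huc : UniformContinuous φ)
    (hb : ∀ᵐ y, |φ y| ≤ B) (hg : IsSingularIntegral K φ g) {η : ℝ} (hη : 0 < η) :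
    ∃ δ > 0, ∀ c ρ, 0 < ρ → ρ ≤ δ → HasMeanOscillationLE g η c ρ := by
  obtain ⟨A, _, W, _, hosc⟩ := hK.exists_hasMeanOscillationLE
  obtain ⟨M, hM_far, hM⟩ : ∃ M, B * W / M ≤ η / 2 ∧ 2 ≤ M :=
    (((tendsto_id.const_div_atTop (B * W)).eventually_le_const (half_pos hη)).and
      (eventually_ge_atTop 2)).exists
  obtain ⟨τ, hτ, hτ_near⟩ : ∃ τ > 0, A * √((2 * M) ^ dim E) * τ < η / 2 :=
    exists_pos_mul_lt (half_pos hη) _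
  obtain ⟨δ, hδ, hφδ⟩ := Metric.uniformContinuous_iff.1 huc τ hτ
  refine ⟨δ / (2 * M), by positivity, fun c ρ hρ hρδ => ?_⟩
  refine (hosc huc.continuous.aestronglyMeasurable hb hg (a := φ c) hM hρ hτ.le ?_).mono
    (by linarith)
  filter_upwards [ae_restrict_mem measurableSet_ball] with y hy
  refine (hφδ ((mem_ball.1 hy).trans_le ?_)).le
  rwa [le_div_iff₀ (by positivity), mul_comm, mul_assoc] at hρδ

end

end IsOddSingularKernel

end MeanOscillation

section Cube

open Metric

lemma integral_abs_sub_average_le {α : Type*} [MeasurableSpace α] {μ : Measure α}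
    [IsFiniteMeasure μ] {f : α → ℝ} (hf : Integrable f μ) (C : ℝ) :
    ∫ x, |f x - ⨍ y, f y ∂μ| ∂μ ≤ 2 * ∫ x, |f x - C| ∂μ := by
  have hfC : Integrable (fun x => f x - C) μ := hf.sub (integrable_const C)
  have hmean : ∫ x, (f x - C) ∂μ = μ.real univ * (⨍ y, f y ∂μ - C) := by
    rw [integral_sub hf (integrable_const C), integral_const, ← measure_smul_average, ← smul_sub,
      smul_eq_mul]
  have hconst : ∫ _, |C - ⨍ y, f y ∂μ| ∂μ ≤ ∫ x, |f x - C| ∂μ :=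
    calc ∫ _, |C - ⨍ y, f y ∂μ| ∂μ = |∫ x, (f x - C) ∂μ| := by
          rw [hmean, integral_const, smul_eq_mul, abs_mul, abs_of_nonneg measureReal_nonneg,
            abs_sub_comm]
      _ ≤ ∫ x, |f x - C| ∂μ := abs_integral_le_integral_abs
  calc ∫ x, |f x - ⨍ y, f y ∂μ| ∂μ
      ≤ ∫ x, (|f x - C| + |C - ⨍ y, f y ∂μ|) ∂μ :=
        integral_mono (hf.sub (integrable_const _)).abs (hfC.abs.add (integrable_const _))
          fun x => abs_sub_le _ _ _
    _ = ∫ x, |f x - C| ∂μ + ∫ _, |C - ⨍ y, f y ∂μ| ∂μ :=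
        integral_add hfC.abs (integrable_const _)
    _ ≤ 2 * ∫ x, |f x - C| ∂μ := by linarith

variable {n : ℕ} {f : EuclideanSpace ℝ (Fin n) → ℝ} {b l : ℝ}

lemma cube_eq_preimage_ofLp (c : EuclideanSpace ℝ (Fin n)) (l : ℝ) :
    cube c l = WithLp.ofLp ⁻¹' univ.pi fun i => Ioo (c i) (c i + l) := by
  ext x
  simp only [cube, mem_ofPred_eq, mem_preimage, mem_univ_pi]

lemma volume_real_cube (c : EuclideanSpace ℝ (Fin n)) (hl : 0 ≤ l) :
    volume.real (cube c l) = l ^ n := by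
  have hpi : MeasurableSet (univ.pi fun i => Ioo (c i) (c i + l)) :=
    .univ_pi fun i => measurableSet_Ioo
  rw [cube_eq_preimage_ofLp,
    (PiLp.volume_preserving_ofLp (Fin n)).measureReal_preimage hpi.nullMeasurableSet,
    measureReal_def, volume_pi_Ioo_toReal fun i => by linarith]
  simp only [add_sub_cancel_left, Finset.prod_const, Finset.card_univ, Fintype.card_fin]

lemma cube_subset_closedBall (c : EuclideanSpace ℝ (Fin n)) (hl : 0 ≤ l) :
    cube c l ⊆ closedBall c (√n * l) := by
  intro x hx
  rw [mem_closedBall, EuclideanSpace.dist_eq]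
  calc √(∑ i, dist (x i) (c i) ^ 2) ≤ √(∑ _ : Fin n, l ^ 2) := by
        gcongr with i
        rw [dist_eq, abs_of_nonneg] <;> linarith [(hx i).1, (hx i).2]
    _ = √n * l := by
        rw [Finset.sum_const, Finset.card_univ, Fintype.card_fin, nsmul_eq_mul,
          sqrt_mul n.cast_nonneg, sqrt_sq hl]

lemma cubeAvg_eq_setAverage (f : EuclideanSpace ℝ (Fin n) → ℝ) (c : EuclideanSpace ℝ (Fin n))
    (hl : 0 ≤ l) : cubeAvg f c l = ⨍ x in cube c l, f x := by
  rw [cubeAvg, setAverage_eq, volume_real_cube c hl, smul_eq_mul, inv_mul_eq_div]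

/-- The ratio of the volume of the closed ball of radius `√n * l` to the volume of the cube of side
length `l` that it contains. -/
noncomputable def ballCubeRatio (n : ℕ) : ℝ :=
  √n ^ n * volume.real (ball (0 : EuclideanSpace ℝ (Fin n)) 1)

lemma HasMeanOscillationLE.cubeOsc_le {c : EuclideanSpace ℝ (Fin n)} (hl : 0 < l)
    (h : HasMeanOscillationLE f b c (√n * l)) : cubeOsc f c l ≤ 2 * ballCubeRatio n * b := by
  obtain ⟨hint, C, hC⟩ := h
  have hsub := cube_subset_closedBall c hl.le
  have hfin : IsFiniteMeasure (volume.restrict (closedBall c (√n * l))) :=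
    isFiniteMeasure_restrict.2 measure_closedBall_lt_top.ne
  have hfin' : IsFiniteMeasure (volume.restrict (cube c l)) :=
    isFiniteMeasure_restrict.2 (measure_ne_top_of_subset hsub measure_closedBall_lt_top.ne)
  rw [cubeOsc, cubeAvg_eq_setAverage f c hl.le, div_le_iff₀ (by positivity)]
  calc ∫ x in cube c l, |f x - ⨍ y in cube c l, f y|
      ≤ 2 * ∫ x in cube c l, |f x - C| := integral_abs_sub_average_le (hint.mono_set hsub) C
    _ ≤ 2 * ∫ x in closedBall c (√n * l), |f x - C| := by
        gcongr
        · exact ae_of_all _ fun x => abs_nonneg _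
        · exact (hint.sub (integrable_const C)).abs
    _ ≤ 2 * (b * volume.real (closedBall c (√n * l))) := by gcongr
    _ = 2 * ballCubeRatio n * b * l ^ n := by
        rw [ballCubeRatio, Measure.addHaar_real_closedBall volume c (by positivity),
          finrank_euclideanSpace_fin]
        ring

lemma isVMO_of_hasMeanOscillationLE [NeZero n]
    (hbmo : ∃ b, ∀ c, ∀ ρ > 0, HasMeanOscillationLE f b c ρ)
    (hvmo : ∀ η > 0, ∃ δ > 0, ∀ c ρ, 0 < ρ → ρ ≤ δ → HasMeanOscillationLE f η c ρ) :
    IsVMO f := by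
  obtain ⟨b, hb⟩ := hbmo
  have hn : 0 < √(n : ℝ) := sqrt_pos.2 (Nat.cast_pos.2 (NeZero.pos n))
  have hloc : LocallyIntegrable f := fun x =>
    ⟨closedBall x 1, closedBall_mem_nhds x one_pos, (hb x 1 one_pos).1⟩
  refine ⟨⟨hloc, _, fun c l hl => (hb c (√n * l) (by positivity)).cubeOsc_le hl⟩,
    fun ε hε => ?_⟩
  obtain ⟨η, hη, hηε⟩ := exists_pos_mul_lt hε (2 * ballCubeRatio n)
  obtain ⟨δ, hδ, hosc⟩ := hvmo η hη
  refine ⟨δ / √n, by positivity, fun c l hl hlδ => ?_⟩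
  rw [le_div_iff₀' hn] at hlδ
  exact ((hosc c (√n * l) (by positivity) hlδ).cubeOsc_le hl).trans hηε.le

end Cube

section Riesz

lemma isOddSingularKernel_clm_div_norm_pow {E : Type*} [NormedAddCommGroup E] [NormedSpace ℝ E]
    (ℓ : E →L[ℝ] ℝ) : IsOddSingularKernel (fun x => ℓ x / ‖x‖ ^ (dim E + 1)) ‖ℓ‖₊ where
  odd x := by simp only [map_neg, norm_neg, neg_div]
  homogeneous r hr x := by
    rw [map_smul, norm_smul, norm_of_nonneg hr.le, smul_eq_mul, mul_pow, pow_succ r]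
    field_simp
  lipschitzOnWith x hx y hy := by
    rw [mem_sphere_zero_iff_norm] at hx hy
    simpa only [hx, hy, one_pow, div_one] using ℓ.lipschitz x y

lemma exists_isOddSingularKernel_rieszK {n : ℕ} (j : Fin n) :
    ∃ L, IsOddSingularKernel (rieszK n j) L := by
  let c : ℝ := Gamma ((n + 1) / 2) / π ^ (((n : ℝ) + 1) / 2)
  have h := isOddSingularKernel_clm_div_norm_pow (c • EuclideanSpace.proj (𝕜 := ℝ) j)
  rw [finrank_euclideanSpace_fin] at h
  exact ⟨_, h⟩

theorem riesz_buc_mem_vmo_general {n : ℕ} [NeZero n] {K φ g : EuclideanSpace ℝ (Fin n) → ℝ}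
    {L : ℝ≥0} {B : ℝ} (hK : IsOddSingularKernel K L) (huc : UniformContinuous φ)
    (hb : ∀ x, |φ x| ≤ B) (hg : IsSingularIntegral K φ g) : IsVMO g :=
  isVMO_of_hasMeanOscillationLE
    (hK.exists_forall_hasMeanOscillationLE huc.continuous.aestronglyMeasurable (ae_of_all _ hb) hg)
    fun _ hη =>
      hK.exists_forall_hasMeanOscillationLE_of_uniformContinuous huc (ae_of_all _ hb) hg hη

end Riesz

/-- If `φ ∈ BUC(ℝⁿ)` then `R_j(φ) ∈ VMO(ℝⁿ)` for each `j`. -/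
theorem riesz_buc_mem_vmo {n : ℕ} (j : Fin n) (φ g : EuclideanSpace ℝ (Fin n) → ℝ) (B : ℝ)
    (huc : UniformContinuous φ) (hb : ∀ x, |φ x| ≤ B)
    (hg : IsRieszTransformLinf j φ g) : IsVMO g :=
  have : NeZero n := ⟨j.pos.ne'⟩
  let ⟨_, hK⟩ := exists_isOddSingularKernel_rieszK j
  riesz_buc_mem_vmo_general hK huc hb hg
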